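/- There exists a history-deterministic Büchi automaton with 65 states that recognises L_main. -/

import Mathlib

/-- A (nondeterministic) Büchi/coBüchi automaton: an initial state, a set of
transitions, and a subset of *significant* transitions. -/
structure BuchiAutomaton (σ : Type) (Q : Type) where
  init : Q
  trans : Set (Q × σ × Q)
  sig : Set (Q × σ × Q)
  sig_sub : sig ⊆ trans

namespace BuchiAutomaton

variable {σ Q : Type}

/-- `ρ` is a run of `A` on the infinite word `w`, starting at the state `p`. -/
def IsRunFrom (A : BuchiAutomaton σ Q) (p : Q) (w : ℕ → σ) (ρ : ℕ → Q) : Prop :=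
  ρ 0 = p ∧ ∀ i, (ρ i, w i, ρ (i + 1)) ∈ A.trans

/-- Büchi acceptance: the run contains infinitely many significant transitions. -/
def BuchiAcc (A : BuchiAutomaton σ Q) (w : ℕ → σ) (ρ : ℕ → Q) : Prop :=
  ∀ N, ∃ i, N ≤ i ∧ (ρ i, w i, ρ (i + 1)) ∈ A.sig

/-- coBüchi acceptance: the run contains finitely many significant transitions. -/
def CoBuchiAcc (A : BuchiAutomaton σ Q) (w : ℕ → σ) (ρ : ℕ → Q) : Prop :=
  ∃ N, ∀ i, N ≤ i → (ρ i, w i, ρ (i + 1)) ∉ A.sig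

/-- The language of `A` (as a Büchi automaton), with initial state `p`. -/
def LangFrom (A : BuchiAutomaton σ Q) (p : Q) : Set (ℕ → σ) :=
  {w | ∃ ρ, A.IsRunFrom p w ρ ∧ A.BuchiAcc w ρ}

/-- The language of `A`, read as a Büchi automaton. -/
def Lang (A : BuchiAutomaton σ Q) : Set (ℕ → σ) :=
  A.LangFrom A.init

/-- The language of `A`, read as a coBüchi automaton. -/
def CoLang (A : BuchiAutomaton σ Q) : Set (ℕ → σ) :=
  {w | ∃ ρ, A.IsRunFrom A.init w ρ ∧ A.CoBuchiAcc w ρ}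

/-- `A` is deterministic: at most one outgoing transition per state and letter. -/
def Deterministic (A : BuchiAutomaton σ Q) : Prop :=
  ∀ p a q q', (p, a, q) ∈ A.trans → (p, a, q') ∈ A.trans → q = q'

/-- `FinRun A l p`: `l` is a finite run of `A` from the initial state, ending in
the state `p` (represented as the chronological list of its transitions). -/
inductive FinRun (A : BuchiAutomaton σ Q) : List (Q × σ × Q) → Q → Prop
  | nil : FinRun A [] A.init
  | snoc {l : List (Q × σ × Q)} {p : Q} {a : σ} {q : Q} :
      FinRun A l p → (p, a, q) ∈ A.trans → FinRun A (l ++ [(p, a, q)]) q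

/-- A resolver for `A`: a function from finite runs and letters to transitions,
such that on every finite run from the initial state ending in a state `p` and
every letter `a`, it outputs a transition on `a` with source `p`. -/
structure Resolver (A : BuchiAutomaton σ Q) where
  res : List (Q × σ × Q) → σ → Q × σ × Q
  res_valid : ∀ l p a, A.FinRun l p →
    (res l a).1 = p ∧ (res l a).2.1 = a ∧ res l a ∈ A.trans

/-- The history (finite run) built by a resolver after reading `n` letters of `w`. -/
def Resolver.hist {A : BuchiAutomaton σ Q} (r : Resolver A) (w : ℕ → σ) : ℕ → List (Q × σ × Q)
  | 0 => []
  | n + 1 => r.hist w n ++ [r.res (r.hist w n) (w n)]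

/-- The run induced by the resolver on `w` satisfies the Büchi condition. -/
def Resolver.InducedBuchiAcc {A : BuchiAutomaton σ Q} (r : Resolver A) (w : ℕ → σ) : Prop :=
  ∀ N, ∃ n, N ≤ n ∧ r.res (r.hist w n) (w n) ∈ A.sig

/-- The run induced by the resolver on `w` satisfies the coBüchi condition. -/
def Resolver.InducedCoBuchiAcc {A : BuchiAutomaton σ Q} (r : Resolver A) (w : ℕ → σ) : Prop :=
  ∃ N, ∀ n, N ≤ n → r.res (r.hist w n) (w n) ∉ A.sig

/-- `A` is history-deterministic (as a Büchi automaton). -/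
def HistoryDeterministic (A : BuchiAutomaton σ Q) : Prop :=
  ∃ r : Resolver A, ∀ w ∈ A.Lang, r.InducedBuchiAcc w

/-- `A` is history-deterministic (as a coBüchi automaton). -/
def CoHistoryDeterministic (A : BuchiAutomaton σ Q) : Prop :=
  ∃ r : Resolver A, ∀ w ∈ A.CoLang, r.InducedCoBuchiAcc w

end BuchiAutomaton

/-- The finite factor `w[m..n)` of the infinite word `w`, as a list. -/
def wordSegment {σ : Type} (w : ℕ → σ) (m n : ℕ) : List σ :=
  (List.range (n - m)).map fun i => w (m + i)

/-- `omegaPow X`: the infinite words that can be written as an infinite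
concatenation of finite words, each belonging to `X`. -/
def omegaPow {σ : Type} (X : Set (List σ)) : Set (ℕ → σ) :=
  {w | ∃ φ : ℕ → ℕ, φ 0 = 0 ∧ StrictMono φ ∧ ∀ k, wordSegment w (φ k) (φ (k + 1)) ∈ X}

/-- The alphabet `Σ = {a, b, c, 1, …, 6, r₁, …, r₆, y}` (with `num i` the digit
`i+1` and `res i` the reset letter `r_{i+1}`). -/
inductive Al : Type
  | a | b | c
  | num (i : Fin 6)
  | res (i : Fin 6)
  | y
deriving DecidableEq, Fintype

/-- The states of the classifier DFA. -/
inductive CSt : Type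
  | p | q | t | s | r
  | ell (i : Fin 6)
deriving DecidableEq, Fintype

/-- The (partial) transition function of the classifier. A digit `num i` belongs
to `E = {1,2,3}` iff `i.val < 3`, and to `F = {4,5,6}` otherwise. -/
def clStep : CSt → Al → Option CSt
  | .p, .b => some .p
  | .p, .num _ => some .p
  | .p, .y => some .p
  | .p, .a => some .q
  | .p, .c => some .t
  | .q, .a => some .q
  | .q, .num _ => some .p
  | .q, .y => some .p
  | .q, .b => some .r
  | .q, .c => some .s
  | .t, .c => some .t
  | .t, .b => some .p
  | .t, .a => some .q
  | .t, .num i => if i.val < 3 then some (.ell i) else some .p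
  | .t, .y => some .p
  | .s, .c => some .s
  | .s, .b => some .r
  | .s, .a => some .q
  | .s, .num i => if i.val < 3 then some (.ell i) else some .p
  | .s, .y => some .p
  | .r, .b => some .r
  | .r, .a => some .q
  | .r, .c => some .s
  | .r, .num i => if 3 ≤ i.val then some (.ell i) else some .p
  | .r, .y => some .p
  | _, _ => none

/-- The run of the classifier on a finite word, from a given state. -/
def clRun : CSt → List Al → Option CSt
  | c, [] => some c
  | c, l :: w =>
    match clStep c l with
    | some c' => clRun c' w
    | none => none

/-- The language `L_α` (for `α : Fin 6`, representing `L_{α+1}`): the finite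
words whose run in the classifier from `p` is defined and ends in `ℓ_α`. -/
def Lcl (α : Fin 6) : Set (List Al) :=
  {w | clRun .p w = some (.ell α)}

/-- `L_main = (Σ^* ⋃_{α≠β} (L_α ∪ {r_α}) L_β L_β Σ^* y)^ω`. -/
def LMain : Set (ℕ → Al) :=
  omegaPow {w | ∃ α β : Fin 6, α ≠ β ∧ ∃ u v₁ v₂ v₃ z : List Al,
    (v₁ ∈ Lcl α ∨ v₁ = [Al.res α]) ∧ v₂ ∈ Lcl β ∧ v₃ ∈ Lcl β ∧
    w = u ++ v₁ ++ v₂ ++ v₃ ++ z ++ [Al.y]}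

/-!
Call *event* a reset letter or the end of a word of some `L_α`. Once an event is known, the
classifier can be restarted after each event and run exactly: the automaton remembers the label of
the last event and whether that event is a classified word preceded by an event with another label;
the next classified word with the same label then completes the pattern, and only the letter `y` is
awaited. This takes `6 · 2 · 5 + 1` states.

Before the first event only `4` states are left, too few to run the classifier. They suffice to
look for words of the `L_e` with `e ∈ E` alone, or of the `L_f` with `f ∈ F` alone, and
nondeterminism chooses between the two. The resolver runs the exact classifier on the side and
always bets that the next classified word is of the same kind as the last one. Since the pattern
ends with two words of the same `L_β`, the bet pays off at the latest on the second one. Hence the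
first block of the `ω`-power reveals an event, and the next block produces a significant
transition.
-/

section WordSegment

variable {σ : Type}

lemma wordSegment_self (w : ℕ → σ) (m : ℕ) : wordSegment w m m = [] := by
  simp [wordSegment]

lemma wordSegment_succ (w : ℕ → σ) {m n : ℕ} (h : m ≤ n) :
    wordSegment w m (n + 1) = wordSegment w m n ++ [w n] := by
  simp [wordSegment, Nat.succ_sub h, List.range_succ, h]

lemma exists_of_wordSegment_eq_concat {w : ℕ → σ} {m n : ℕ} {l : List σ} {x : σ}
    (h : wordSegment w m n = l ++ [x]) :
    ∃ k, m ≤ k ∧ n = k + 1 ∧ wordSegment w m k = l ∧ w k = x := by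
  have hmn : m < n := by
    by_contra! hnm
    simp [wordSegment, Nat.sub_eq_zero_of_le hnm] at h
  obtain ⟨k, rfl⟩ := Nat.exists_eq_succ_of_ne_zero (Nat.ne_zero_of_lt hmn)
  have hmk : m ≤ k := Nat.le_of_lt_succ hmn
  rw [Nat.succ_eq_add_one, wordSegment_succ w hmk] at h
  exact ⟨k, hmk, rfl, List.append_singleton_inj.mp h⟩

end WordSegment

namespace BuchiAutomaton

variable {σ Q C : Type} {A : BuchiAutomaton σ Q}

lemma IsRunFrom.wordSegment_mem {inv : Q → Set (List σ)} {p : Q} {w : ℕ → σ} {ρ : ℕ → Q}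
    (hρ : A.IsRunFrom p w ρ) {m n : ℕ} (hmn : m ≤ n) (nil_mem : [] ∈ inv (ρ m))
    (append_mem : ∀ q x q' l, (q, x, q') ∈ A.trans → l ∈ inv q → l ++ [x] ∈ inv q') :
    wordSegment w m n ∈ inv (ρ n) := by
  induction n, hmn using Nat.le_induction with
  | base => rwa [wordSegment_self]
  | succ n hn ih =>
    rw [wordSegment_succ w hn]
    exact append_mem _ _ _ _ (hρ.2 n) ih

theorem lang_subset_omegaPow {X : Set (List σ)} (inv : Q → Set (List σ))
    (nil_mem : [] ∈ inv A.init)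
    (append_mem : ∀ q x q' l, (q, x, q') ∈ A.trans → l ∈ inv q → l ++ [x] ∈ inv q')
    (mem_of_sig : ∀ q x q' l, (q, x, q') ∈ A.sig → l ∈ inv q → l ++ [x] ∈ X)
    (eq_init_of_sig : ∀ q x q', (q, x, q') ∈ A.sig → q' = A.init) :
    A.Lang ⊆ omegaPow X := by
  rintro w ⟨ρ, hρ, hacc⟩
  choose next le_next next_sig using hacc
  let φ : ℕ → ℕ := fun k => Nat.rec 0 (fun _ n => next n + 1) k
  have hφ (k : ℕ) : φ (k + 1) = next (φ k) + 1 := rfl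
  have ρ_φ (k : ℕ) : ρ (φ k) = A.init := by
    cases k with
    | zero => exact hρ.1
    | succ k => exact eq_init_of_sig _ _ _ (next_sig (φ k))
  refine ⟨φ, rfl, strictMono_nat_of_lt_succ fun k => ?_, fun k => ?_⟩
  · exact (hφ k).symm ▸ Nat.lt_succ_of_le (le_next _)
  · rw [hφ, wordSegment_succ w (le_next _)]
    refine mem_of_sig _ _ _ _ (next_sig (φ k)) ?_
    exact hρ.wordSegment_mem (le_next _) ((ρ_φ k).symm ▸ nil_mem) append_mem

/-- The last state of a finite run, given as the list of its transitions. -/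
def endState (A : BuchiAutomaton σ Q) (l : List (Q × σ × Q)) : Q :=
  l.foldl (fun _ e => e.2.2) A.init

lemma endState_concat (l : List (Q × σ × Q)) (e : Q × σ × Q) :
    A.endState (l ++ [e]) = e.2.2 := by
  simp [endState]

lemma FinRun.endState_eq {l : List (Q × σ × Q)} {p : Q} (h : A.FinRun l p) :
    A.endState l = p := by
  cases h with
  | nil => rfl
  | snoc _ _ => exact endState_concat _ _

/-- Every letter can be read in every state. -/
def Complete (A : BuchiAutomaton σ Q) : Prop :=
  ∀ q x, ∃ q', (q, x, q') ∈ A.trans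

/-- A deterministic machine with configurations in `C` that reads the input word and shows in each
configuration a state of `A`, so that the states shown form a run of `A`. It is a resolver of `A`
whose choices depend on the letters alone. -/
structure Guide (A : BuchiAutomaton σ Q) (C : Type) where
  start : C
  step : C → σ → C
  state : C → Q
  state_start : state start = A.init
  state_step : ∀ c x, (state c, x, state (step c x)) ∈ A.trans

namespace Guide

/-- The configuration after `n` letters of `w`. -/
def config (G : A.Guide C) (w : ℕ → σ) : ℕ → C
  | 0 => G.start
  | n + 1 => G.step (G.config w n) (w n)

variable (G : A.Guide C)

/-- The run of `A` shown on the infinite word `w`. -/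
def run (w : ℕ → σ) (n : ℕ) : Q :=
  G.state (G.config w n)

lemma isRunFrom_run (w : ℕ → σ) : A.IsRunFrom A.init w (G.run w) :=
  ⟨G.state_start, fun n => G.state_step (G.config w n) (w n)⟩

lemma mem_lang {w : ℕ → σ} (h : A.BuchiAcc w (G.run w)) : w ∈ A.Lang :=
  ⟨G.run w, G.isRunFrom_run w, h⟩

open Classical in
/-- The resolver that follows `G`, and takes arbitrary transitions once the history has
deviated from `G`. -/
noncomputable def resolver (hA : A.Complete) : A.Resolver where
  res l x :=
    let c := (l.map fun e => e.2.1).foldl G.step G.start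
    if A.endState l = G.state c then (G.state c, x, G.state (G.step c x))
    else (A.endState l, x, (hA (A.endState l) x).choose)
  res_valid l p x h := by
    obtain rfl := h.endState_eq
    dsimp only
    split_ifs with hc
    · exact ⟨hc.symm, rfl, G.state_step _ _⟩
    · exact ⟨rfl, rfl, (hA _ x).choose_spec⟩

lemma resolver_res {hA : A.Complete} {l : List (Q × σ × Q)} {c : C}
    (hl : (l.map fun e => e.2.1).foldl G.step G.start = c) (hc : A.endState l = G.state c)
    (x : σ) : (G.resolver hA).res l x = (G.state c, x, G.state (G.step c x)) := by
  subst hl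
  exact if_pos hc

lemma resolver_hist (hA : A.Complete) (w : ℕ → σ) (n : ℕ) :
    (((G.resolver hA).hist w n).map fun e => e.2.1).foldl G.step G.start = G.config w n ∧
      A.endState ((G.resolver hA).hist w n) = G.run w n := by
  induction n with
  | zero => exact ⟨rfl, G.state_start.symm⟩
  | succ n ih =>
    rw [Resolver.hist, G.resolver_res ih.1 ih.2, endState_concat]
    simp [ih.1, config, run]

lemma resolver_res_hist (hA : A.Complete) (w : ℕ → σ) (n : ℕ) :
    (G.resolver hA).res ((G.resolver hA).hist w n) (w n) =
      (G.run w n, w n, G.run w (n + 1)) :=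
  G.resolver_res (G.resolver_hist hA w n).1 (G.resolver_hist hA w n).2 (w n)

theorem historyDeterministic (hA : A.Complete)
    (h : ∀ w ∈ A.Lang, A.BuchiAcc w (G.run w)) : A.HistoryDeterministic := by
  refine ⟨G.resolver hA, fun w hw N => ?_⟩
  simpa only [resolver_res_hist] using h w hw N

end Guide

end BuchiAutomaton

namespace LMain

/-! ### The automaton -/

/-- The states of the classifier other than `ℓ₁, …, ℓ₆`. -/
inductive Core : Type
  | p | q | t | s | r
deriving DecidableEq

instance : Fintype Core where
  elems := {.p, .q, .t, .s, .r}
  complete k := by cases k <;> decide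

/-- The inclusion of the states of the classifier other than `ℓ₁, …, ℓ₆`. -/
def Core.toCSt : Core → CSt
  | .p => .p
  | .q => .q
  | .t => .t
  | .s => .s
  | .r => .r

/-- What reading a letter tells about the classifier, restarted after each event: it is still
running, a word of `L_j` ends, or the reset letter `r_j` has been read. -/
inductive Outcome : Type
  | ongoing (k : Core)
  | word (j : Fin 6)
  | reset (j : Fin 6)
deriving DecidableEq

namespace Outcome

/-- The state of the classifier, restarted after each event. -/
def core : Outcome → Core
  | .ongoing k => k
  | _ => .p

/-- The state of the classifier when it is not restarted. -/
def toCSt? : Outcome → Option CSt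
  | .ongoing k => some k.toCSt
  | .word j => some (.ell j)
  | .reset _ => none

end Outcome

/-- The outcome of reading a letter when the classifier is in the given state. -/
def classify (k : Core) (x : Al) : Outcome :=
  match x, clStep k.toCSt x with
  | .res j, _ => .reset j
  | _, some (.ell j) => .word j
  | _, some .q => .ongoing .q
  | _, some .t => .ongoing .t
  | _, some .s => .ongoing .s
  | _, some .r => .ongoing .r
  | _, _ => .ongoing .p

/-- Whether the digit `num j` belongs to `F = {4, 5, 6}`; otherwise it belongs to
`E = {1, 2, 3}`. -/
def inF (j : Fin 6) : Bool :=
  decide (3 ≤ j.val)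

/-- A lossy view of the classifier, used while no event is known. The state `t` stands for `t`
or `s`, and `qs` stands for `q` or `s`; nothing is known in state `p`. -/
inductive Search : Type
  | p | t | qs | r
deriving DecidableEq

instance : Fintype Search where
  elems := {.p, .t, .qs, .r}
  complete κ := by cases κ <;> decide

/-- The states of the automaton.
`found`: the pattern has been seen, and the letter `y` is awaited.
`search κ`: no event is known.
`track i fresh k`: the last event has label `i`; the flag `fresh` says that it is a word of `L_i`
and that the event before it has another label. -/
inductive State : Type
  | found
  | search (κ : Search)
  | track (i : Fin 6) (fresh : Bool) (k : Core)
deriving DecidableEq, Fintype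

/-- The transitions from the search states. The flag, resolved by nondeterminism, tells whether
words of `L_f` with `f ∈ F`, or words of `L_e` with `e ∈ E`, are looked for. -/
def searchStep : Bool → Search → Al → State
  | _, _, .res j => .track j false .p
  | true, _, .a => .search .qs
  | false, _, .c => .search .t
  | true, .qs, .c => .search .qs
  | true, .r, .c => .search .qs
  | _, .qs, .b => .search .r
  | _, .r, .b => .search .r
  | _, .t, .num j => if inF j then .search .p else .track j false .p
  | _, .r, .num j => if inF j then .track j false .p else .search .p
  | _, _, _ => .search .p

/-- The transition function of the automaton, the flag resolving the nondeterminism. -/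
def step (f : Bool) : State → Al → State
  | .found, x => if x = .y then .search .p else .found
  | .search κ, x => searchStep f κ x
  | .track i fresh k, x =>
    match classify k x with
    | .ongoing k' => .track i fresh k'
    | .reset j => .track j false .p
    | .word j => if i ≠ j then .track j true .p else if fresh then .found else .track j false .p

/-- The automaton recognising `LMain`. -/
def automaton : BuchiAutomaton Al State where
  init := .search .p
  trans := {e | ∃ f, e.2.2 = step f e.1 e.2.1}
  sig := {(.found, .y, .search .p)}
  sig_sub := Set.singleton_subset_iff.mpr ⟨false, rfl⟩

lemma automaton_complete : automaton.Complete :=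
  fun q x => ⟨step false q x, false, rfl⟩

/-! ### The classifier -/

lemma clStep_toCSt : ∀ k x, clStep (Core.toCSt k) x = (classify k x).toCSt? := by
  decide

lemma eq_res_of_classify_eq_reset : ∀ k x j, classify k x = .reset j → x = .res j := by
  decide

lemma clRun_concat (c : CSt) (v : List Al) (x : Al) :
    clRun c (v ++ [x]) = (clRun c v).bind fun d => clStep d x := by
  induction v generalizing c with
  | nil => cases h : clStep c x <;> simp [clRun, h]
  | cons z v ih => cases h : clStep c z <;> simp [clRun, h, ih]

lemma eq_nil_of_clRun_ell {i j : Fin 6} {v : List Al} (h : clRun (.ell i) v = some (.ell j)) :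
    v = [] ∧ i = j := by
  cases v with
  | nil => simpa [clRun] using h
  | cons x v => cases x <;> simp [clRun, clStep] at h

lemma clRun_cons_eq_ell {k : Core} {x : Al} {v : List Al} {j : Fin 6}
    (h : clRun k.toCSt (x :: v) = some (.ell j)) :
    (classify k x = .word j ∧ v = []) ∨
      ∃ k', classify k x = .ongoing k' ∧ clRun k'.toCSt v = some (.ell j) := by
  simp only [clRun, clStep_toCSt] at h
  cases hx : classify k x with
  | ongoing k' => exact .inr ⟨k', rfl, by simpa [hx, Outcome.toCSt?] using h⟩
  | word i =>
    obtain ⟨rfl, rfl⟩ := eq_nil_of_clRun_ell (by simpa [hx, Outcome.toCSt?] using h)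
    exact .inl ⟨rfl, rfl⟩
  | reset i => simp [hx, Outcome.toCSt?] at h

/-! ### Soundness -/

/-- The words that lead the classifier to the state `c`; `reach (.ell α)` is `L_α`. -/
def reach (c : CSt) : Language Al :=
  {v | clRun .p v = some c}

/-- The language `L_i ∪ {r_i}`. -/
def event (i : Fin 6) : Language Al :=
  reach (.ell i) + {[.res i]}

/-- The words over the alphabet with an infix in `(L_i ∪ {r_i}) · L_j · L_j` for some `i ≠ j`. -/
def pattern : Language Al :=
  {l | ∃ i j, i ≠ j ∧ l ∈ ⊤ * event i * reach (.ell j) * reach (.ell j) * ⊤}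

lemma LMain_eq_omegaPow : LMain = omegaPow {w | ∃ l ∈ pattern, w = l ++ [.y]} := by
  refine congrArg omegaPow (Set.ext fun w => ?_)
  constructor
  · rintro ⟨i, j, hij, u, v₁, v₂, v₃, z, h₁, h₂, h₃, rfl⟩
    open Language in
    exact ⟨_, ⟨i, j, hij, append_mem_mul (append_mem_mul (append_mem_mul (append_mem_mul
      trivial h₁) h₂) h₃) trivial⟩, rfl⟩
  · rintro ⟨_, ⟨i, j, hij, _, ⟨_, ⟨_, ⟨u, -, v₁, h₁, rfl⟩, v₂, h₂, rfl⟩, v₃, h₃, rfl⟩, z, -, rfl⟩,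
      rfl⟩
    exact ⟨i, j, hij, u, v₁, v₂, v₃, z, h₁, h₂, h₃, rfl⟩

lemma concat_mem_mul_reach {X : Language Al} {l : List Al} {c d : CSt} {x : Al}
    (hl : l ∈ X * reach c) (hx : clStep c x = some d) : l ++ [x] ∈ X * reach d := by
  obtain ⟨u, hu, v, hv, rfl⟩ := hl
  have hvx : v ++ [x] ∈ reach d :=
    (clRun_concat .p v x).trans (by rw [show clRun .p v = some c from hv, Option.bind_some, hx])
  exact Language.mem_mul.mpr ⟨u, hu, v ++ [x], hvx, by simp⟩

lemma mem_mul_reach_p {X : Language Al} {l : List Al} (hl : l ∈ X) : l ∈ X * reach .p :=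
  Language.mem_mul.mpr ⟨l, hl, [], rfl, l.append_nil⟩

lemma concat_res_mem_event (l : List Al) (j : Fin 6) : l ++ [.res j] ∈ ⊤ * event j :=
  Language.append_mem_mul trivial (.inr rfl)

lemma mem_event_of_mem_reach_ell {X : Language Al} {l : List Al} {j : Fin 6}
    (hl : l ∈ X * reach (.ell j)) : l ∈ ⊤ * event j := by
  obtain ⟨u, -, v, hv, rfl⟩ := hl
  exact Language.append_mem_mul trivial (.inl hv)

lemma pattern_append {l : List Al} (hl : l ∈ pattern) (z : List Al) : l ++ z ∈ pattern := by
  obtain ⟨i, j, hij, u, hu, v, -, rfl⟩ := hl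
  exact ⟨i, j, hij, Language.mem_mul.mpr ⟨u, hu, v ++ z, trivial, by simp⟩⟩

/-- Whether the lossy state `κ` admits the state `k` of the classifier. -/
def Search.Admits (κ : Search) (k : Core) : Prop :=
  (κ, k) ∈ ({(.p, .p), (.t, .t), (.t, .s), (.qs, .q), (.qs, .s), (.r, .r)} : Finset _)

instance (κ : Search) : DecidablePred κ.Admits :=
  fun _ => inferInstanceAs (Decidable (_ ∈ _))

/- In the first alternative the classified suffix is forgotten, replaced by `[x]`, or extended
by `x`. -/
lemma searchStep_cases : ∀ f κ k x, Search.Admits κ k →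
    (∃ κ' k', searchStep f κ x = .search κ' ∧ κ'.Admits k' ∧
      (k' = .p ∨ clStep .p x = some k'.toCSt ∨ clStep k.toCSt x = some k'.toCSt)) ∨
    ∃ j, searchStep f κ x = .track j false .p ∧
      (x = .res j ∨ clStep k.toCSt x = some (.ell j)) := by
  decide

/-- What is known, in each state, about the word read since the last significant transition. -/
def invariant : State → Language Al
  | .found => pattern
  | .search κ => {l | ∃ k, κ.Admits k ∧ l ∈ ⊤ * reach k.toCSt}
  | .track i false k => ⊤ * event i * reach k.toCSt
  | .track j true k =>
    {l | ∃ i, i ≠ j ∧ l ∈ ⊤ * event i * reach (.ell j) * reach k.toCSt}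

lemma concat_mem_invariant_searchStep {κ : Search} {l : List Al} (hl : l ∈ invariant (.search κ))
    (f : Bool) (x : Al) : l ++ [x] ∈ invariant (searchStep f κ x) := by
  obtain ⟨k, hk, hl⟩ := hl
  obtain ⟨κ', k', hstep, hk', hread⟩ | ⟨j, hstep, hread⟩ := searchStep_cases f κ k x hk
  · rw [hstep]
    refine ⟨k', hk', ?_⟩
    obtain rfl | hread | hread := hread
    · exact mem_mul_reach_p trivial
    · exact concat_mem_mul_reach (mem_mul_reach_p trivial) hread
    · exact concat_mem_mul_reach hl hread
  · rw [hstep]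
    refine mem_mul_reach_p ?_
    obtain rfl | hread := hread
    · exact concat_res_mem_event l j
    · exact mem_event_of_mem_reach_ell (concat_mem_mul_reach hl hread)

lemma invariant_track_le {i : Fin 6} {fresh : Bool} {k : Core} :
    invariant (.track i fresh k) ≤ ⊤ * event i * reach k.toCSt := by
  cases fresh with
  | false => exact le_rfl
  | true =>
    rintro _ ⟨_, -, v₁, hv₁, v₂, hv₂, rfl⟩
    exact Language.append_mem_mul (mem_event_of_mem_reach_ell hv₁) hv₂

lemma concat_mem_invariant_track {i : Fin 6} {fresh : Bool} {k : Core} {l : List Al}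
    (hl : l ∈ invariant (.track i fresh k)) (f : Bool) (x : Al) :
    l ++ [x] ∈ invariant (step f (.track i fresh k) x) := by
  have hstep := clStep_toCSt k x
  have hevent := invariant_track_le hl
  cases hx : classify k x with
  | ongoing k' =>
    rw [hx] at hstep
    simp only [step, hx]
    cases fresh with
    | false => exact concat_mem_mul_reach hl hstep
    | true =>
      obtain ⟨i', hi', hl⟩ := hl
      exact ⟨i', hi', concat_mem_mul_reach hl hstep⟩
  | reset j =>
    obtain rfl := eq_res_of_classify_eq_reset k x j hx
    exact mem_mul_reach_p (concat_res_mem_event l j)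
  | word j =>
    rw [hx] at hstep
    have hword := concat_mem_mul_reach hevent hstep
    simp only [step, hx]
    split_ifs with hij hfresh
    · exact ⟨i, hij, mem_mul_reach_p hword⟩
    · obtain rfl := not_not.mp hij
      subst hfresh
      obtain ⟨i', hi', hl⟩ := hl
      refine ⟨i', i, hi', ?_⟩
      exact Language.mem_mul.mpr ⟨_, concat_mem_mul_reach hl hstep, [], trivial, by simp⟩
    · exact mem_mul_reach_p (mem_event_of_mem_reach_ell hword)

lemma concat_mem_invariant {q : State} {l : List Al} (hl : l ∈ invariant q) (f : Bool) (x : Al) :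
    l ++ [x] ∈ invariant (step f q x) := by
  cases q with
  | found =>
    by_cases hx : x = .y
    · rw [step, if_pos hx]
      exact ⟨.p, by decide, mem_mul_reach_p trivial⟩
    · rw [step, if_neg hx]
      exact pattern_append hl [x]
  | search κ => exact concat_mem_invariant_searchStep hl f x
  | track i fresh k => exact concat_mem_invariant_track hl f x

lemma lang_subset_LMain : automaton.Lang ⊆ LMain := by
  rw [LMain_eq_omegaPow]
  refine BuchiAutomaton.lang_subset_omegaPow invariant ?_ ?_ ?_ ?_
  · exact ⟨.p, by decide, mem_mul_reach_p trivial⟩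
  · rintro q x q' l ⟨f, hf : q' = step f q x⟩ hl
    exact hf ▸ concat_mem_invariant hl f x
  · rintro q x q' l ⟨⟩ hl
    exact ⟨l, hl, rfl⟩
  · rintro q x q' ⟨⟩
    rfl

/-! ### The resolver -/

/-- The progress of the resolver. In the search phase the flag is the bet: it tells whether the
next classified word is expected to belong to some `L_f` with `f ∈ F`. -/
inductive Phase : Type
  | found
  | search (bet : Bool)
  | track (i : Fin 6) (fresh : Bool)
deriving DecidableEq, Fintype

namespace Phase

/-- The effect of an outcome of the classifier on the phase: when a word escapes the search, the
bet is changed to its kind. -/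
def react : Phase → Outcome → Phase
  | φ, .ongoing _ => φ
  | .found, _ => .found
  | _, .reset j => .track j false
  | .search bet, .word j => if inF j = bet then .track j false else .search (inF j)
  | .track i fresh, .word j =>
    if i ≠ j then .track j true else if fresh then .found else .track j false

/-- No event is known. -/
def IsSearch (φ : Phase) : Prop :=
  ∃ bet, φ = .search bet

end Phase

/-- The view of the classifier that the search with the given bet has. -/
def Core.view : Bool → Core → Search
  | false, .t => .t
  | false, .s => .t
  | true, .q => .qs
  | true, .s => .qs
  | true, .r => .r
  | _, _ => .p

/-- The phase of the resolver and the state of the classifier, restarted after each event. -/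
abbrev Config := Phase × Core

namespace Config

/-- The state of the automaton in the given configuration. -/
def state : Config → State
  | (.found, _) => .found
  | (.search bet, k) => .search (k.view bet)
  | (.track i fresh, k) => .track i fresh k

lemma state_eq_found {c : Config} (hc : c.1 = .found) : c.state = .found := by
  obtain ⟨_, k⟩ := c
  subst hc
  rfl

/-- Reading a letter, without leaving the phase `found`. This agrees with `step` as long as no
significant transition is taken. -/
def advance (c : Config) (x : Al) : Config :=
  (c.1.react (classify c.2 x), (classify c.2 x).core)

/-- Reading a letter, with the search restarted by `y` in the phase `found`. -/
def step (c : Config) (x : Al) : Config :=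
  if c.1 = .found ∧ x = .y then (.search false, .p) else c.advance x

end Config

lemma searchStep_view : ∀ bet k x, searchStep bet (Core.view bet k) x =
    Config.state (Config.advance (.search bet, k) x) := by
  decide

lemma state_step (c : Config) (x : Al) : ∃ f, (c.step x).state = step f c.state x := by
  obtain ⟨_ | bet | ⟨i, fresh⟩, k⟩ := c
  · by_cases hx : x = .y
    · exact ⟨false, by simp [Config.step, step, Config.state, hx, Core.view]⟩
    · refine ⟨false, ?_⟩
      cases h : classify k x <;>
        simp [Config.step, Config.advance, step, Config.state, hx, h, Phase.react]
  · exact ⟨bet, by simp [Config.step, step, Config.state, searchStep_view]⟩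
  · refine ⟨false, ?_⟩
    cases h : classify k x with
    | ongoing k' | reset j => simp [Config.step, Config.advance, step, Config.state, h,
        Phase.react, Outcome.core]
    | word j =>
      by_cases hij : i = j <;> cases fresh <;>
        simp [Config.step, Config.advance, step, Config.state, h, Phase.react, Outcome.core, hij]

/-- The resolver: it bets that the next classified word is of the same kind as the last one. -/
def guide : automaton.Guide Config where
  start := (.search false, .p)
  step := Config.step
  state := Config.state
  state_start := rfl
  state_step := state_step

/-! ### Completeness -/

lemma foldl_advance_of_clRun {k : Core} {v : List Al} {j : Fin 6}
    (h : clRun k.toCSt v = some (.ell j)) (φ : Phase) :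
    v.foldl Config.advance (φ, k) = (φ.react (.word j), .p) := by
  induction v generalizing k with
  | nil => cases k <;> simp [clRun, Core.toCSt] at h
  | cons x v ih =>
    obtain ⟨hx, rfl⟩ | ⟨k', hx, hv⟩ := clRun_cons_eq_ell h
    · simp [Config.advance, hx, Outcome.core]
    · simpa [Config.advance, hx, Outcome.core, Phase.react] using ih hv

/-- From `k'`, the classifier finds everything that it finds from `k`. -/
def Core.Dominates (k' k : Core) : Prop :=
  k = .p ∨ k = k' ∨ k = .t ∧ k' = .s

instance (k' : Core) : DecidablePred k'.Dominates :=
  fun _ => inferInstanceAs (Decidable (_ ∨ _))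

lemma classify_of_dominates : ∀ k' k x, Core.Dominates k' k →
    (∀ j, classify k x = .word j → classify k' x = .word j) ∧
      ∀ d, classify k x = .ongoing d → (classify k' x).core.Dominates d := by
  decide

lemma exists_foldl_advance_of_clRun {k k' : Core} {v : List Al} {j : Fin 6} (hk : k'.Dominates k)
    (h : clRun k.toCSt v = some (.ell j)) (φ : Phase) :
    ∃ ψ : Phase, v.foldl Config.advance (φ, k') = (ψ.react (.word j), .p) := by
  induction v generalizing k k' φ with
  | nil => cases k <;> simp [clRun, Core.toCSt] at h
  | cons x v ih =>
    obtain ⟨word_of_word, dominates_of_ongoing⟩ := classify_of_dominates k' k x hk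
    obtain ⟨hx, rfl⟩ | ⟨d, hx, hv⟩ := clRun_cons_eq_ell h
    · exact ⟨φ, by simp [Config.advance, word_of_word j hx, Outcome.core]⟩
    · exact ih (dominates_of_ongoing d hx) hv _

lemma exists_foldl_advance_of_mem_event {v : List Al} {i : Fin 6} (hv : v ∈ event i)
    (c : Config) : ∃ (ψ : Phase) (o : Outcome), (o = .word i ∨ o = .reset i) ∧
      v.foldl Config.advance c = (ψ.react o, .p) := by
  obtain hv | rfl := hv
  · obtain ⟨ψ, hψ⟩ := exists_foldl_advance_of_clRun (k := .p) (.inl rfl) hv c.1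
    exact ⟨ψ, .word i, .inl rfl, hψ⟩
  · exact ⟨c.1, .reset i, .inr rfl, rfl⟩

namespace Phase

lemma react_eq_found {φ : Phase} (hφ : φ = .found) (o : Outcome) : φ.react o = .found := by
  subst hφ
  cases o <;> rfl

lemma not_isSearch_react {φ : Phase} (hφ : ¬ φ.IsSearch) (o : Outcome) :
    ¬ (φ.react o).IsSearch := by
  cases φ with
  | search bet => exact absurd ⟨bet, rfl⟩ hφ
  | found | track i fresh =>
    cases o <;> simp only [IsSearch, react] <;> grind

lemma not_isSearch_react_word_word (φ : Phase) (j : Fin 6) :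
    ¬ ((φ.react (.word j)).react (.word j)).IsSearch := by
  revert φ j
  simp only [IsSearch]
  decide

lemma react_eq_found_or_track {φ : Phase} {o : Outcome} {i : Fin 6}
    (ho : o = .word i ∨ o = .reset i) (h : ¬ (φ.react o).IsSearch) :
    φ.react o = .found ∨ ∃ fresh, φ.react o = .track i fresh := by
  obtain rfl | rfl := ho <;> cases φ <;> grind [IsSearch, react]

lemma react_word_word_eq_found {φ : Phase} {o : Outcome} {i j : Fin 6}
    (ho : o = .word i ∨ o = .reset i) (hij : i ≠ j) (h : ¬ (φ.react o).IsSearch) :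
    ((φ.react o).react (.word j)).react (.word j) = .found := by
  obtain h | ⟨fresh, h⟩ := react_eq_found_or_track ho h
  · rw [h]
    rfl
  · rw [h]
    simp [react, hij]

end Phase

lemma not_isSearch_foldl_advance {c : Config} (hc : ¬ c.1.IsSearch) (l : List Al) :
    ¬ (l.foldl Config.advance c).1.IsSearch :=
  List.foldlRecOn (motive := fun c : Config => ¬ c.1.IsSearch) l _ hc
    fun _ hc _ _ => Phase.not_isSearch_react hc _

lemma foldl_advance_eq_found {c : Config} (hc : c.1 = .found) (l : List Al) :
    (l.foldl Config.advance c).1 = .found :=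
  List.foldlRecOn (motive := fun c : Config => c.1 = .found) l _ hc
    fun _ hc _ _ => Phase.react_eq_found hc _

lemma foldl_advance_of_mem_pattern {l : List Al} (hl : l ∈ pattern) (c : Config) :
    ∃ i j, i ≠ j ∧ ∃ (u z : List Al) (ψ : Phase) (o : Outcome), (o = .word i ∨ o = .reset i) ∧
      u.foldl Config.advance c = (ψ.react o, .p) ∧
      l.foldl Config.advance c =
        z.foldl Config.advance (((ψ.react o).react (.word j)).react (.word j), .p) := by
  obtain ⟨i, j, hij, _, ⟨_, ⟨_, ⟨u, -, v₁, h₁, rfl⟩, v₂, h₂, rfl⟩, v₃, h₃, rfl⟩, z, -, rfl⟩ := hl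
  obtain ⟨ψ, o, ho, hψ⟩ := exists_foldl_advance_of_mem_event h₁ (u.foldl Config.advance c)
  refine ⟨i, j, hij, u ++ v₁, z, ψ, o, ho, by simp [hψ], ?_⟩
  simp only [List.foldl_append, hψ]
  rw [foldl_advance_of_clRun (k := .p) h₂, foldl_advance_of_clRun (k := .p) h₃]

lemma not_isSearch_of_mem_pattern {l : List Al} (hl : l ∈ pattern) (c : Config) :
    ¬ (l.foldl Config.advance c).1.IsSearch := by
  obtain ⟨i, j, -, u, z, ψ, o, -, -, hl⟩ := foldl_advance_of_mem_pattern hl c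
  rw [hl]
  exact not_isSearch_foldl_advance (Phase.not_isSearch_react_word_word _ j) z

lemma eq_found_of_mem_pattern {l : List Al} (hl : l ∈ pattern) {c : Config}
    (hc : ¬ c.1.IsSearch) : (l.foldl Config.advance c).1 = .found := by
  obtain ⟨i, j, hij, u, z, ψ, o, ho, hu, hl⟩ := foldl_advance_of_mem_pattern hl c
  have hψ : ¬ (ψ.react o).IsSearch := by
    simpa only [hu] using not_isSearch_foldl_advance hc u
  rw [hl]
  exact foldl_advance_eq_found (Phase.react_word_word_eq_found ho hij hψ) z

lemma config_eq_foldl_advance {w : ℕ → Al} {m n : ℕ} (hmn : m ≤ n)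
    (h : ∀ i, m ≤ i → ¬ ((guide.config w i).1 = .found ∧ w i = .y)) :
    guide.config w n = (wordSegment w m n).foldl Config.advance (guide.config w m) := by
  induction n, hmn using Nat.le_induction with
  | base => simp [wordSegment_self]
  | succ n hn ih =>
    rw [wordSegment_succ w hn, List.foldl_append, ← ih]
    exact if_neg (h n hn)

lemma mem_sig_of_found {w : ℕ → Al} {n : ℕ} (hfound : (guide.config w n).1 = .found)
    (hy : w n = .y) : (guide.run w n, w n, guide.run w (n + 1)) ∈ automaton.sig := by
  have hnow : guide.run w n = .found := Config.state_eq_found hfound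
  have hnext : guide.run w (n + 1) = .search .p := congrArg Config.state (if_pos ⟨hfound, hy⟩)
  rw [hnow, hnext, hy]
  rfl

lemma buchiAcc_of_mem_LMain {w : ℕ → Al} (hw : w ∈ LMain) :
    automaton.BuchiAcc w (guide.run w) := by
  rw [LMain_eq_omegaPow] at hw
  obtain ⟨φ, -, hφ, hblock⟩ := hw
  intro N
  by_contra! h_sig
  have quiet (i : ℕ) (hi : N ≤ i) : ¬ ((guide.config w i).1 = .found ∧ w i = .y) :=
    fun hi' => h_sig i hi (mem_sig_of_found hi'.1 hi'.2)
  have config_eq {m n : ℕ} (hm : N ≤ m) (hmn : m ≤ n) :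
      guide.config w n = (wordSegment w m n).foldl Config.advance (guide.config w m) :=
    config_eq_foldl_advance hmn fun i hi => quiet i (hm.trans hi)
  have known : ¬ (guide.config w (φ (N + 1))).1.IsSearch := by
    obtain ⟨l, hl, hseg⟩ := hblock N
    rw [config_eq hφ.le_apply (hφ.monotone N.le_succ), hseg]
    exact not_isSearch_of_mem_pattern (pattern_append hl _) _
  obtain ⟨l, hl, hseg⟩ := hblock (N + 1)
  obtain ⟨n, hn, -, hseg, hy⟩ := exists_of_wordSegment_eq_concat hseg
  have le_n : N ≤ n := N.le_succ.trans (hφ.le_apply.trans hn)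
  refine quiet n le_n ⟨?_, hy⟩
  rw [config_eq (N.le_succ.trans hφ.le_apply) hn, hseg]
  exact eq_found_of_mem_pattern hl known

end LMain

/-- There is a history-deterministic Büchi automaton with 65
states recognising `L_main`. -/
theorem exists_hd_buchi_65_states_for_LMain :
    ∃ (Q : Type) (iQ : Fintype Q) (A : BuchiAutomaton Al Q),
      @Fintype.card Q iQ = 65 ∧ A.HistoryDeterministic ∧ A.Lang = LMain := by
  have lang_eq : LMain.automaton.Lang = LMain :=
    LMain.lang_subset_LMain.antisymm fun _ hw =>
      LMain.guide.mem_lang (LMain.buchiAcc_of_mem_LMain hw)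
  have hd : LMain.automaton.HistoryDeterministic :=
    LMain.guide.historyDeterministic LMain.automaton_complete fun _ hw =>
      LMain.buchiAcc_of_mem_LMain (LMain.lang_subset_LMain hw)
  exact ⟨LMain.State, inferInstance, LMain.automaton, rfl, hd, lang_eq⟩
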